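/- arXiv:2504.15269 — 10 statements merged into one kernel-verified Lean document; each statement's English description precedes it below -/
import Mathlib

section
/- For every real b > 0, every real c ≠ 0 and every real t ≥ 0, the infinite product ∏_{k=1}^∞ (1 + t/(2π²k² + c²/2))^{-b} converges and equals (sinh(c/2)/(c/2))^b · (s/sinh(s))^b, where s = ((c²/2 + t)/2)^{1/2}. (This identifies the Laplace transform of the exponentially tilted Kolmogorov-Gamma distribution KG(b,c), defined as the law of (1/(2π²))∑_{k=1}^∞ ε_k/(k² + c²/(4π²)) with ε_k i.i.d. Gamma(b,1), and is the analytic core of the statement that exponential tilting of KG(b,0) by exp(−c²x/2) yields KG(b,c).) -/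
open Real

/-! Substituting `iz/π` into Euler's product for the sine gives
`sinh z / z = ∏_{k≥1} (1 + z²/(π²k²))`. With `s² = (c²/2 + t)/2`, each factor of the Laplace
transform is a ratio of two such factors,
`1 + t/(2π²k² + c²/2) = (π²k² + s²)/(π²k² + (c/2)²)`,
so the product is the `(-b)`-th power of a quotient of two values of `sinh z / z`. -/

lemma hasProd_one_add_sineTerm {z : ℂ} (hz : z ≠ 0) :
    HasProd (fun k : ℕ ↦ 1 + sineTerm z k) (Complex.sin (π * z) / (π * z)) :=
  (multipliable_sineTerm z).hasProd_iff_tendsto_nat.mpr (tendsto_euler_sin_prod' hz)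

lemma hasProd_complex_sinh_div_self {z : ℂ} (hz : z ≠ 0) :
    HasProd (fun k : ℕ ↦ 1 + z ^ 2 / (π ^ 2 * ((k : ℂ) + 1) ^ 2)) (Complex.sinh z / z) := by
  have hπ : (π : ℂ) ≠ 0 := mod_cast pi_ne_zero
  have hw : z * Complex.I / π ≠ 0 := div_ne_zero (mul_ne_zero hz Complex.I_ne_zero) hπ
  convert hasProd_one_add_sineTerm hw using 1
  · funext k
    rw [sineTerm, div_pow, mul_pow, Complex.I_sq, mul_neg_one, ← neg_div, neg_neg, div_div]
  · rw [mul_div_cancel₀ _ hπ, Complex.sin_mul_I, mul_div_mul_right _ _ Complex.I_ne_zero]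

lemma hasProd_sinh_div_self {x : ℝ} (hx : x ≠ 0) :
    HasProd (fun k : ℕ ↦ 1 + x ^ 2 / (π ^ 2 * ((k : ℝ) + 1) ^ 2)) (sinh x / x) := by
  have hofReal : Topology.IsInducing Complex.ofRealHom :=
    Complex.isUniformEmbedding_ofReal.isInducing
  rw [← hofReal.hasProd_iff]
  simpa [Function.comp_def] using hasProd_complex_sinh_div_self (Complex.ofReal_ne_zero.mpr hx)

lemma sinh_div_self_pos {x : ℝ} (hx : x ≠ 0) : 0 < sinh x / x := by
  rcases hx.lt_or_gt with hneg | hpos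
  · exact div_pos_of_neg_of_neg (sinh_neg_iff.mpr hneg) hneg
  · exact div_pos (sinh_pos_iff.mpr hpos) hpos

lemma hasProd_sinh_div_self_div {x y : ℝ} (hx : x ≠ 0) (hy : y ≠ 0) :
    HasProd (fun k : ℕ ↦ (π ^ 2 * ((k : ℝ) + 1) ^ 2 + x ^ 2) / (π ^ 2 * ((k : ℝ) + 1) ^ 2 + y ^ 2))
      ((sinh x / x) / (sinh y / y)) := by
  refine ((hasProd_sinh_div_self hx).div₀ (hasProd_sinh_div_self hy)
    (sinh_div_self_pos hy).ne').congr_fun fun k ↦ ?_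
  have hk : π ^ 2 * ((k : ℝ) + 1) ^ 2 ≠ 0 := by positivity
  rw [one_add_div hk, one_add_div hk, div_div_div_cancel_right₀ hk]

lemma hasProd_rpow_const {ι : Type*} {L : SummationFilter ι} {f : ι → ℝ} {a p : ℝ}
    (hf : ∀ i, 0 ≤ f i) (hfa : HasProd f a L) (hap : a ≠ 0 ∨ 0 ≤ p) :
    HasProd (fun i ↦ f i ^ p) (a ^ p) L :=
  (Filter.Tendsto.rpow_const hfa hap).congr fun s ↦
    (finsetProd_rpow s f (fun i _ ↦ hf i) p).symm

theorem kg_tilted_laplace_product_general (b c t : ℝ) (hc : c ≠ 0) (ht : 0 < c ^ 2 / 2 + t) :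
    HasProd (fun k : ℕ ↦ (1 + t / (2 * π ^ 2 * ((k : ℝ) + 1) ^ 2 + c ^ 2 / 2)) ^ (-b))
      ((sinh (c / 2) / (c / 2)) ^ b *
        (√((c ^ 2 / 2 + t) / 2) / sinh √((c ^ 2 / 2 + t) / 2)) ^ b) := by
  set s := √((c ^ 2 / 2 + t) / 2)
  have hs : 0 < s := sqrt_pos.mpr (half_pos ht)
  have hs_sq : s ^ 2 = (c ^ 2 / 2 + t) / 2 := sq_sqrt (half_pos ht).le
  have hc_half : c / 2 ≠ 0 := div_ne_zero hc two_ne_zero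
  have hc_sinh : 0 < sinh (c / 2) / (c / 2) := sinh_div_self_pos hc_half
  have hs_sinh : 0 < sinh s / s := sinh_div_self_pos hs.ne'
  have hfactor (k : ℕ) : 1 + t / (2 * π ^ 2 * ((k : ℝ) + 1) ^ 2 + c ^ 2 / 2) =
      (π ^ 2 * ((k : ℝ) + 1) ^ 2 + s ^ 2) / (π ^ 2 * ((k : ℝ) + 1) ^ 2 + (c / 2) ^ 2) := by
    rw [hs_sq]
    field
  have hlimit : (sinh (c / 2) / (c / 2)) ^ b * (s / sinh s) ^ b =
      ((sinh s / s) / (sinh (c / 2) / (c / 2))) ^ (-b) := by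
    rw [rpow_neg_eq_inv_rpow, inv_div, div_rpow hc_sinh.le hs_sinh.le, ← inv_div (sinh s),
      inv_rpow hs_sinh.le, div_eq_mul_inv (_ ^ b)]
  simp_rw [hfactor, hlimit]
  exact hasProd_rpow_const (fun k ↦ by positivity) (hasProd_sinh_div_self_div hs.ne' hc_half)
    (.inl (div_pos hs_sinh hc_sinh).ne')

/-- Laplace transform of the exponentially tilted Kolmogorov-Gamma distribution
`KG(b,c)`: for `b > 0`, `c ≠ 0`, `t ≥ 0`,
`∏_{k=1}^∞ (1 + t/(2π²k² + c²/2))^{-b} = (sinh(c/2)/(c/2))^b · (s/sinh s)^b`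
with `s = ((c²/2 + t)/2)^{1/2}`. -/
theorem kg_tilted_laplace_product (b c t : ℝ) (hb : 0 < b) (hc : c ≠ 0) (ht : 0 ≤ t) :
    HasProd (fun k : ℕ => (1 + t / (2 * π ^ 2 * ((k : ℝ) + 1) ^ 2 + c ^ 2 / 2)) ^ (-b))
      ((Real.sinh (c / 2) / (c / 2)) ^ b *
        (Real.sqrt ((c ^ 2 / 2 + t) / 2) / Real.sinh (Real.sqrt ((c ^ 2 / 2 + t) / 2))) ^ b) := by
  exact kg_tilted_laplace_product_general b c t hc (by positivity)
end

section
/- Define sinhc(x) = sinh(x)/x for real x ≠ 0 and sinhc(0) = 1. Then for all real numbers a ≥ 0 and b ≥ 0, sinhc(a + b) ≤ 2 · sinhc(a) · cosh(b). -/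
/-!
The mean of `cosh` over `[0, x]` is `sinhc x = ∫₀¹ cosh (t x) dt`, so
`sinhc (a + b) + sinhc (a - b) = 2 ∫₀¹ cosh (t a) cosh (t b) dt`. Since `cosh (t b) ≤ cosh b` for
`t ∈ [0, 1]`, this is at most `2 sinhc a cosh b`, and the term `sinhc (a - b)` is nonnegative.
-/

open Real

/-- `sinhc x = sinh x / x` for `x ≠ 0`, with `sinhc 0 = 1`. -/
noncomputable def sinhc (x : ℝ) : ℝ := if x = 0 then 1 else Real.sinh x / x

theorem integral_cosh (a b : ℝ) : ∫ t in a..b, cosh t = sinh b - sinh a :=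
  intervalIntegral.integral_eq_sub_of_hasDerivAt (fun t _ ↦ hasDerivAt_sinh t)
    (continuous_cosh.intervalIntegrable a b)

theorem sinhc_eq_integral_cosh (x : ℝ) : sinhc x = ∫ t in (0 : ℝ)..1, cosh (t * x) := by
  rcases eq_or_ne x 0 with rfl | hx
  · simp [sinhc]
  · simp [sinhc, hx, intervalIntegral.integral_comp_mul_right, integral_cosh, div_eq_inv_mul]

theorem sinhc_nonneg (x : ℝ) : 0 ≤ sinhc x := by
  rw [sinhc_eq_integral_cosh]
  exact intervalIntegral.integral_nonneg zero_le_one fun t _ ↦ (cosh_pos _).le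

theorem cosh_add_add_cosh_sub (x y : ℝ) : cosh (x + y) + cosh (x - y) = 2 * cosh x * cosh y := by
  rw [cosh_add, cosh_sub]
  ring

theorem cosh_mul_le_cosh {t : ℝ} (ht : |t| ≤ 1) (x : ℝ) : cosh (t * x) ≤ cosh x := by
  rw [cosh_le_cosh, abs_mul]
  exact mul_le_of_le_one_left (abs_nonneg x) ht

theorem sinhc_add_add_sinhc_sub_eq_integral (a b : ℝ) :
    sinhc (a + b) + sinhc (a - b) = ∫ t in (0 : ℝ)..1, 2 * cosh (t * a) * cosh (t * b) := by
  have integrable (x : ℝ) :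
      IntervalIntegrable (fun t : ℝ ↦ cosh (t * x)) MeasureTheory.volume 0 1 :=
    Continuous.intervalIntegrable (by fun_prop) 0 1
  simp only [sinhc_eq_integral_cosh]
  rw [← intervalIntegral.integral_add (integrable _) (integrable _)]
  simp only [mul_add, mul_sub, cosh_add_add_cosh_sub]

theorem sinhc_add_add_sinhc_sub_le (a b : ℝ) :
    sinhc (a + b) + sinhc (a - b) ≤ 2 * sinhc a * cosh b :=
  calc
    sinhc (a + b) + sinhc (a - b) = ∫ t in (0 : ℝ)..1, 2 * cosh (t * a) * cosh (t * b) :=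
      sinhc_add_add_sinhc_sub_eq_integral a b
    _ ≤ ∫ t in (0 : ℝ)..1, 2 * cosh (t * a) * cosh b := by
      refine intervalIntegral.integral_mono_on zero_le_one
        (Continuous.intervalIntegrable (by fun_prop) 0 1)
        (Continuous.intervalIntegrable (by fun_prop) 0 1) fun t ht ↦ ?_
      have ht_abs : |t| ≤ 1 := (abs_of_nonneg ht.1).trans_le ht.2
      exact mul_le_mul_of_nonneg_left (cosh_mul_le_cosh ht_abs b) (by positivity)
    _ = 2 * sinhc a * cosh b := by
      rw [intervalIntegral.integral_mul_const, intervalIntegral.integral_const_mul,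
        ← sinhc_eq_integral_cosh]

theorem sinhc_add_le_general (a b : ℝ) : sinhc (a + b) ≤ 2 * sinhc a * cosh b :=
  (le_add_of_nonneg_right (sinhc_nonneg (a - b))).trans (sinhc_add_add_sinhc_sub_le a b)

/-- For all `a ≥ 0` and `b ≥ 0`, `sinhc (a + b) ≤ 2 · sinhc a · cosh b`. -/
theorem sinhc_add_le (a b : ℝ) (ha : 0 ≤ a) (hb : 0 ≤ b) :
    sinhc (a + b) ≤ 2 * sinhc a * Real.cosh b :=
  sinhc_add_le_general a b
end

section
/- For all real numbers a > 0 and b > 0, coth(a) · tanh(b) ≤ 1 + 2b/a. -/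
open Real

/-! Since `cosh a - sinh a = e⁻ᵃ ≤ 1` and `a ≤ sinh a`, we have `coth a ≤ 1 + 1 / a`. Multiplying by
`tanh b`, bound the first term by `tanh b ≤ 1` and the second by `tanh b ≤ b`; the latter is the
mean value theorem for `sinh` on `[0, b]`, where its derivative `cosh` is at most `cosh b`. -/

theorem cosh_div_sinh_le_one_add_inv {x : ℝ} (hx : 0 < x) : cosh x / sinh x ≤ 1 + x⁻¹ := by
  have one_le_sinh_div : 1 ≤ x⁻¹ * sinh x := by
    rw [← div_eq_inv_mul, one_le_div hx]
    exact self_le_sinh_iff.2 hx.le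
  rw [div_le_iff₀ (sinh_pos_iff.2 hx)]
  calc
    cosh x = sinh x + exp (-x) := by rw [← cosh_sub_sinh]; ring
    _ ≤ sinh x + 1 := by gcongr; exact exp_le_one_iff.2 (neg_nonpos.2 hx.le)
    _ ≤ sinh x + x⁻¹ * sinh x := by gcongr
    _ = (1 + x⁻¹) * sinh x := by ring

theorem sinh_le_mul_cosh {x : ℝ} (hx : 0 ≤ x) : sinh x ≤ x * cosh x := by
  have deriv_le : ∀ y ∈ interior (Set.Icc 0 x), deriv sinh y ≤ cosh x := by
    intro y hy
    rw [interior_Icc] at hy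
    rw [Real.deriv_sinh]
    exact cosh_le_cosh.2 (abs_le_abs_of_nonneg hy.1.le hy.2.le)
  simpa [mul_comm] using
    (convex_Icc 0 x).image_sub_le_mul_sub_of_deriv_le continuous_sinh.continuousOn
      differentiable_sinh.differentiableOn deriv_le 0 (Set.left_mem_Icc.2 hx) x
      (Set.right_mem_Icc.2 hx) hx

theorem tanh_le_self {x : ℝ} (hx : 0 ≤ x) : tanh x ≤ x := by
  rw [tanh_eq_sinh_div_cosh, div_le_iff₀ (cosh_pos x)]
  exact sinh_le_mul_cosh hx

theorem coth_mul_tanh_le_general {a b : ℝ} (ha : 0 < a) (hb : 0 ≤ b) :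
    cosh a / sinh a * tanh b ≤ 1 + b / a := by
  have tanh_nonneg : 0 ≤ tanh b := by
    rw [tanh_eq_sinh_div_cosh]
    exact div_nonneg (sinh_nonneg_iff.2 hb) (cosh_pos b).le
  calc
    cosh a / sinh a * tanh b ≤ (1 + a⁻¹) * tanh b := by
      gcongr
      exact cosh_div_sinh_le_one_add_inv ha
    _ = tanh b + tanh b / a := by ring
    _ ≤ 1 + b / a := by
      gcongr
      · exact (tanh_lt_one b).le
      · exact tanh_le_self hb

/-- For all `a > 0` and `b > 0`, `coth a · tanh b ≤ 1 + 2b/a`. -/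
theorem coth_mul_tanh_le (a b : ℝ) (ha : 0 < a) (hb : 0 < b) :
    (Real.cosh a / Real.sinh a) * (Real.sinh b / Real.cosh b) ≤ 1 + 2 * b / a := by
  rw [← tanh_eq_sinh_div_cosh]
  exact (coth_mul_tanh_le_general ha hb.le).trans (by gcongr; linarith)
end

section
/- For every real x > 0, define the two sequences a_n^L(x) = 2/(π^{1/2}(2x)^{3/2}) · exp(−n²/(8x)) if n is odd and a_n^L(x) = (n+1)²/(π^{1/2}(2x)^{5/2}) · exp(−(n+1)²/(8x)) if n is even, and a_n^R(x) = 4π²(n+1)² · exp(−2π²(n+1)²x), for n = 0, 1, 2, …. Then both alternating series ∑_{n=0}^∞ (−1)^n a_n^L(x) and ∑_{n=0}^∞ (−1)^n a_n^R(x) converge and are equal. (This is the identity of the two alternating-series representations of the density of the Kolmogorov-Gamma distribution KG(1,0), i.e., of the squared Kolmogorov distribution scaled by 1/π².) -/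
/-!
The distribution function of `KG(1,0)` is `x ↦ cosKernel (1/2) (2πx)`, a Jacobi theta function.
Differentiating its defining series term by term gives the right-tail series. By the functional
equation, `cosKernel a t = t ^ (-1/2) * evenKernel a t⁻¹`, and the product rule yields one multiple
of `evenKernel (1/2) t⁻¹` and one of its derivative; expanded as series over the odd squares, these
are the odd and the even terms of the left-tail series.
-/

open Real

/-- Left-tail alternating series terms of the KG(1,0) density. -/
noncomputable def aL (x : ℝ) (n : ℕ) : ℝ :=
  if Odd n then
    2 / (Real.sqrt π * (2 * x) ^ ((3 : ℝ) / 2)) * Real.exp (-(n : ℝ) ^ 2 / (8 * x))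
  else
    ((n : ℝ) + 1) ^ 2 / (Real.sqrt π * (2 * x) ^ ((5 : ℝ) / 2)) *
      Real.exp (-((n : ℝ) + 1) ^ 2 / (8 * x))

/-- Right-tail alternating series terms of the KG(1,0) density. -/
noncomputable def aR (x : ℝ) (n : ℕ) : ℝ :=
  4 * π ^ 2 * ((n : ℝ) + 1) ^ 2 * Real.exp (-2 * π ^ 2 * ((n : ℝ) + 1) ^ 2 * x)

section ExponentialSeries

open Filter Topology

variable {ι E : Type*} [NormedAddCommGroup E] [NormedSpace ℝ E]
  {μ : ι → ℝ} {c : ι → E} {f : ℝ → E} {t : ℝ}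

lemma abs_mul_exp_mul_le (m : ℝ) {δ s : ℝ} (hδ : 0 < δ) (hs : |s - t| ≤ δ) :
    |m| * exp (m * s) ≤ δ⁻¹ * (exp (m * (t + 2 * δ)) + exp (m * (t - 2 * δ))) := by
  have h_abs : |m| ≤ δ⁻¹ * exp (δ * |m|) := by
    rw [le_inv_mul_iff₀ hδ]
    linarith [add_one_le_exp (δ * |m|)]
  have h_shift : m * s ≤ δ * |m| + m * t := by
    have h_le : m * (s - t) ≤ |m| * δ :=
      (le_abs_self _).trans (abs_mul m (s - t) ▸ mul_le_mul_of_nonneg_left hs (abs_nonneg m))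
    linarith
  calc |m| * exp (m * s)
      ≤ δ⁻¹ * exp (δ * |m|) * exp (δ * |m| + m * t) := by gcongr
    _ = δ⁻¹ * (exp |2 * δ * m| * exp (m * t)) := by
        rw [abs_mul, abs_of_pos (by positivity : 0 < 2 * δ), mul_assoc, ← exp_add, ← exp_add]
        ring_nf
    _ ≤ δ⁻¹ * ((exp (2 * δ * m) + exp (-(2 * δ * m))) * exp (m * t)) := by
        gcongr
        exact exp_abs_le _
    _ = δ⁻¹ * (exp (m * (t + 2 * δ)) + exp (m * (t - 2 * δ))) := by
        rw [add_mul, ← exp_add, ← exp_add]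
        ring_nf

lemma exists_summable_bound_mul_exp_smul
    (hc : ∀ᶠ s in 𝓝 t, Summable fun i ↦ ‖exp (μ i * s) • c i‖) :
    ∃ δ > 0, ∃ u : ι → ℝ, Summable u ∧
      ∀ i, ∀ s ∈ Metric.ball t δ, ‖(μ i * exp (μ i * s)) • c i‖ ≤ u i := by
  obtain ⟨ε, hε, h_summable⟩ := Metric.eventually_nhds_iff.1 hc
  have hδ : 0 < ε / 3 := by positivity
  have h_right := @h_summable (t + 2 * (ε / 3)) (by
    rw [dist_self_add_left, Real.norm_of_nonneg (by positivity)]; linarith)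
  have h_left := @h_summable (t - 2 * (ε / 3)) (by
    rw [dist_self_sub_left, Real.norm_of_nonneg (by positivity)]; linarith)
  refine ⟨ε / 3, hδ, _, (h_right.add h_left).mul_left (ε / 3)⁻¹, fun i s hs ↦ ?_⟩
  have h_exp := abs_mul_exp_mul_le (μ i) hδ (Metric.mem_ball.1 hs).le
  simp only [norm_smul, norm_mul, Real.norm_eq_abs, abs_exp]
  rw [← add_mul, ← mul_assoc]
  gcongr

variable [CompleteSpace E]

theorem hasDerivAt_tsum_exp_smul (hc : ∀ᶠ s in 𝓝 t, Summable fun i ↦ ‖exp (μ i * s) • c i‖) :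
    HasDerivAt (fun s ↦ ∑' i, exp (μ i * s) • c i) (∑' i, (μ i * exp (μ i * t)) • c i) t := by
  obtain ⟨δ, hδ, u, hu, h_bound⟩ := exists_summable_bound_mul_exp_smul hc
  have h_mem : t ∈ Metric.ball t δ := Metric.mem_ball_self hδ
  refine hasDerivAt_tsum_of_isPreconnected hu Metric.isOpen_ball
    (convex_ball t δ).isPreconnected (fun i s _ ↦ ?_) h_bound h_mem hc.self_of_nhds.of_norm h_mem
  simpa [mul_comm] using ((hasDerivAt_id s).const_mul (μ i)).exp.smul_const (c i)

theorem hasDerivAt_of_hasSum_exp_smul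
    (hc : ∀ᶠ s in 𝓝 t, Summable fun i ↦ ‖exp (μ i * s) • c i‖)
    (hf : ∀ᶠ s in 𝓝 t, HasSum (fun i ↦ exp (μ i * s) • c i) (f s)) :
    HasDerivAt f (∑' i, (μ i * exp (μ i * t)) • c i) t :=
  (hasDerivAt_tsum_exp_smul hc).congr_of_eventuallyEq (hf.mono fun _ h ↦ h.tsum_eq.symm)

theorem hasSum_deriv_of_hasSum_exp_smul
    (hc : ∀ᶠ s in 𝓝 t, Summable fun i ↦ ‖exp (μ i * s) • c i‖)
    (hf : ∀ᶠ s in 𝓝 t, HasSum (fun i ↦ exp (μ i * s) • c i) (f s)) :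
    HasSum (fun i ↦ (μ i * exp (μ i * t)) • c i) (deriv f t) := by
  obtain ⟨δ, hδ, u, hu, h_bound⟩ := exists_summable_bound_mul_exp_smul hc
  rw [(hasDerivAt_of_hasSum_exp_smul hc hf).deriv]
  exact (Summable.of_norm_bounded hu fun i ↦ h_bound i t (Metric.mem_ball_self hδ)).hasSum

end ExponentialSeries

lemma hasSum_nat_of_hasSum_int_of_reflect {K : Type*} [DivisionRing K] [NeZero (2 : K)]
    [TopologicalSpace K] [IsTopologicalSemiring K] {f : ℤ → K} {s : K} (hf : HasSum f s)
    (h_reflect : ∀ n, f (-(n + 1)) = f n) : HasSum (fun n : ℕ ↦ f n) (s / 2) := by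
  refine (hf.nat_add_neg_add_one.div_const 2).congr_fun fun n ↦ ?_
  rw [h_reflect, add_self_div_two]

section HurwitzKernels

open HurwitzZeta Filter Topology

variable {t : ℝ}

lemma eventually_hasSum_evenKernel (a : ℝ) (ht : 0 < t) :
    ∀ᶠ s in 𝓝 t,
      HasSum (fun n : ℤ ↦ exp (-π * (n + a) ^ 2 * s) • (1 : ℝ)) (evenKernel a s) := by
  filter_upwards [lt_mem_nhds ht] with s hs
  simpa only [smul_eq_mul, mul_one] using hasSum_int_evenKernel a hs

lemma differentiableAt_evenKernel (a : UnitAddCircle) (ht : 0 < t) :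
    DifferentiableAt ℝ (evenKernel a) t := by
  induction a using QuotientAddGroup.induction_on with | H a =>
  have h_sum := eventually_hasSum_evenKernel a ht
  exact (hasDerivAt_of_hasSum_exp_smul (h_sum.mono fun _ h ↦ h.summable.norm)
    h_sum).differentiableAt

lemma hasSum_int_deriv_evenKernel (a : ℝ) (ht : 0 < t) :
    HasSum (fun n : ℤ ↦ -π * (n + a) ^ 2 * exp (-π * (n + a) ^ 2 * t))
      (deriv (evenKernel a) t) := by
  have h_sum := eventually_hasSum_evenKernel a ht
  simpa only [smul_eq_mul, mul_one] using
    hasSum_deriv_of_hasSum_exp_smul (h_sum.mono fun _ h ↦ h.summable.norm) h_sum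

lemma hasSum_nat_deriv_cosKernel (a : ℝ) (ht : 0 < t) :
    HasSum (fun n : ℕ ↦ -π * (n + 1) ^ 2 * exp (-π * (n + 1) ^ 2 * t) *
      (2 * cos (2 * π * a * (n + 1)))) (deriv (cosKernel a) t) := by
  have h_sum : ∀ᶠ s in 𝓝 t, HasSum (fun n : ℕ ↦ exp (-π * (n + 1) ^ 2 * s) •
      (2 * cos (2 * π * a * (n + 1)))) (cosKernel a s - 1) := by
    filter_upwards [lt_mem_nhds ht] with s hs
    simpa only [smul_eq_mul, mul_comm (exp _)] using hasSum_nat_cosKernel₀ a hs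
  simpa only [smul_eq_mul, deriv_sub_const] using
    hasSum_deriv_of_hasSum_exp_smul (h_sum.mono fun _ h ↦ h.summable.norm) h_sum

lemma cosKernel_eq_rpow_mul_evenKernel_inv (a : UnitAddCircle) (ht : 0 < t) :
    cosKernel a t = t ^ (-1 / 2 : ℝ) * evenKernel a t⁻¹ := by
  rw [evenKernel_functional_equation, one_div t⁻¹, inv_inv, inv_rpow ht.le, one_div, inv_inv,
    ← mul_assoc, ← rpow_add ht]
  norm_num

theorem deriv_cosKernel (a : UnitAddCircle) (ht : 0 < t) :
    deriv (cosKernel a) t = -(t ^ (-3 / 2 : ℝ) * (evenKernel a t⁻¹ / 2) +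
      t ^ (-5 / 2 : ℝ) * deriv (evenKernel a) t⁻¹) := by
  have h_rpow : HasDerivAt (fun s : ℝ ↦ s ^ (-1 / 2 : ℝ)) (-1 / 2 * t ^ (-3 / 2 : ℝ)) t := by
    convert hasDerivAt_rpow_const (p := -1 / 2) (Or.inl ht.ne') using 3
    norm_num
  have h_even : HasDerivAt (fun s ↦ evenKernel a s⁻¹)
      (deriv (evenKernel a) t⁻¹ * -(t ^ 2)⁻¹) t :=
    (differentiableAt_evenKernel a (inv_pos.2 ht)).hasDerivAt.comp t (hasDerivAt_inv ht.ne')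
  have h_cos : cosKernel a =ᶠ[𝓝 t] fun s ↦ s ^ (-1 / 2 : ℝ) * evenKernel a s⁻¹ := by
    filter_upwards [lt_mem_nhds ht] with s hs using cosKernel_eq_rpow_mul_evenKernel_inv a hs
  have h_pow : t ^ (-5 / 2 : ℝ) = t ^ (-1 / 2 : ℝ) * (t ^ 2)⁻¹ := by
    rw [← rpow_natCast t 2, ← rpow_neg ht.le, ← rpow_add ht]
    norm_num
  rw [((h_rpow.mul h_even).congr_of_eventuallyEq h_cos).deriv, h_pow]
  ring

lemma hasSum_nat_evenKernel_half (ht : 0 < t) :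
    HasSum (fun n : ℕ ↦ exp (-π * (n + 1 / 2) ^ 2 * t))
      (evenKernel ((1 / 2 : ℝ) : UnitAddCircle) t / 2) := by
  refine hasSum_nat_of_hasSum_int_of_reflect (hasSum_int_evenKernel (1 / 2) ht) fun n ↦ ?_
  push_cast
  ring_nf

lemma hasSum_nat_deriv_evenKernel_half (ht : 0 < t) :
    HasSum (fun n : ℕ ↦ -π * (n + 1 / 2) ^ 2 * exp (-π * (n + 1 / 2) ^ 2 * t))
      (deriv (evenKernel ((1 / 2 : ℝ) : UnitAddCircle)) t / 2) := by
  refine hasSum_nat_of_hasSum_int_of_reflect (hasSum_int_deriv_evenKernel (1 / 2) ht) fun n ↦ ?_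
  push_cast
  ring_nf

end HurwitzKernels

section KolmogorovGamma

open HurwitzZeta

variable {x : ℝ}

lemma sqrt_mul_rpow {a y : ℝ} (ha : 0 < a) (hy : 0 ≤ y) (p : ℝ) :
    √a * y ^ p = (a * y) ^ p / a ^ (p - 1 / 2) := by
  rw [mul_rpow ha.le hy, rpow_sub ha, ← sqrt_eq_rpow]
  field_simp

lemma aL_two_mul (hx : 0 < x) (n : ℕ) :
    aL x (2 * n) = -(4 * π) * (2 * π * x) ^ (-5 / 2 : ℝ) *
      (-π * (n + 1 / 2) ^ 2 * exp (-π * (n + 1 / 2) ^ 2 * (2 * π * x)⁻¹)) := by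
  have h_const : √π * (2 * x) ^ (5 / 2 : ℝ) = ((2 * π * x) ^ (-5 / 2 : ℝ))⁻¹ / π ^ 2 := by
    rw [sqrt_mul_rpow pi_pos (by positivity), ← rpow_neg (by positivity), ← rpow_natCast]
    ring_nf
  have h_exp : -((2 * n : ℕ) + 1 : ℝ) ^ 2 / (8 * x) =
      -π * (n + 1 / 2) ^ 2 * (2 * π * x)⁻¹ := by
    push_cast
    field_simp
    ring
  rw [aL, if_neg (by simp), h_const, h_exp]
  push_cast
  field_simp
  ring

lemma aL_two_mul_add_one (hx : 0 < x) (n : ℕ) :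
    aL x (2 * n + 1) = 2 * π * (2 * π * x) ^ (-3 / 2 : ℝ) *
      exp (-π * (n + 1 / 2) ^ 2 * (2 * π * x)⁻¹) := by
  have h_const : √π * (2 * x) ^ (3 / 2 : ℝ) = ((2 * π * x) ^ (-3 / 2 : ℝ))⁻¹ / π := by
    rw [sqrt_mul_rpow pi_pos (by positivity), ← rpow_neg (by positivity),
      show (3 / 2 - 1 / 2 : ℝ) = 1 by norm_num, rpow_one]
    ring_nf
  have h_exp : -((2 * n + 1 : ℕ) : ℝ) ^ 2 / (8 * x) =
      -π * (n + 1 / 2) ^ 2 * (2 * π * x)⁻¹ := by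
    push_cast
    field_simp
    ring
  rw [aL, if_pos (by simp), h_const, h_exp]
  field_simp

theorem hasSum_neg_one_pow_mul_aL (hx : 0 < x) :
    HasSum (fun n : ℕ ↦ (-1 : ℝ) ^ n * aL x n)
      (2 * π * deriv (cosKernel ((1 / 2 : ℝ) : UnitAddCircle)) (2 * π * x)) := by
  have ht : 0 < 2 * π * x := by positivity
  have h_even : HasSum (fun n : ℕ ↦ (-1 : ℝ) ^ (2 * n) * aL x (2 * n))
      (-(4 * π) * (2 * π * x) ^ (-5 / 2 : ℝ) *
        (deriv (evenKernel ((1 / 2 : ℝ) : UnitAddCircle)) (2 * π * x)⁻¹ / 2)) := by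
    simpa only [(even_two_mul _).neg_one_pow, one_mul, aL_two_mul hx] using
      (hasSum_nat_deriv_evenKernel_half (inv_pos.2 ht)).mul_left _
  have h_odd : HasSum (fun n : ℕ ↦ (-1 : ℝ) ^ (2 * n + 1) * aL x (2 * n + 1))
      (-(2 * π * (2 * π * x) ^ (-3 / 2 : ℝ) *
        (evenKernel ((1 / 2 : ℝ) : UnitAddCircle) (2 * π * x)⁻¹ / 2))) := by
    simpa only [(odd_two_mul_add_one _).neg_one_pow, neg_one_mul, aL_two_mul_add_one hx] using
      ((hasSum_nat_evenKernel_half (inv_pos.2 ht)).mul_left _).neg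
  have h_sum := HasSum.even_add_odd (f := fun n ↦ (-1 : ℝ) ^ n * aL x n) h_even h_odd
  convert h_sum using 1
  rw [deriv_cosKernel _ ht]
  ring

theorem hasSum_neg_one_pow_mul_aR (hx : 0 < x) :
    HasSum (fun n : ℕ ↦ (-1 : ℝ) ^ n * aR x n)
      (2 * π * deriv (cosKernel ((1 / 2 : ℝ) : UnitAddCircle)) (2 * π * x)) := by
  have h_deriv := hasSum_nat_deriv_cosKernel (1 / 2) (by positivity : 0 < 2 * π * x)
  refine (h_deriv.mul_left (2 * π)).congr_fun fun n ↦ ?_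
  have h_cos : cos (2 * π * (1 / 2) * (n + 1)) = (-1) ^ (n + 1) := by
    rw [← cos_nat_mul_pi]
    push_cast
    ring_nf
  rw [aR, h_cos]
  ring_nf

end KolmogorovGamma

/-- For every `x > 0`, the two alternating series `∑ (−1)^n a_n^L(x)` and
`∑ (−1)^n a_n^R(x)` both converge and are equal (the two representations of the
density of the Kolmogorov-Gamma distribution `KG(1,0)`). -/
theorem kg_density_two_series (x : ℝ) (hx : 0 < x) :
    Summable (fun n : ℕ => (-1 : ℝ) ^ n * aL x n) ∧
    Summable (fun n : ℕ => (-1 : ℝ) ^ n * aR x n) ∧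
    ∑' n : ℕ, (-1 : ℝ) ^ n * aL x n = ∑' n : ℕ, (-1 : ℝ) ^ n * aR x n := by
  have hL := hasSum_neg_one_pow_mul_aL hx
  have hR := hasSum_neg_one_pow_mul_aR hx
  exact ⟨hL.summable, hR.summable, hL.tsum_eq.trans hR.tsum_eq.symm⟩
end

section
/- Fix a real t with log(2)/(3π²) < t < 1/4 and a real c. For x > 0 define a_n(x; c, t) = (sinh(c/2)/(c/2)) · exp(−c²x/2) · a_n^L(x) if 0 < x < t, and a_n(x; c, t) = (sinh(c/2)/(c/2)) · exp(−c²x/2) · a_n^R(x) if x ≥ t, where a_n^L(x) = 2/(π^{1/2}(2x)^{3/2}) · exp(−n²/(8x)) for odd n, a_n^L(x) = (n+1)²/(π^{1/2}(2x)^{5/2}) · exp(−(n+1)²/(8x)) for even n, and a_n^R(x) = 4π²(n+1)² · exp(−2π²(n+1)²x). Then for every fixed x > 0, the sequence n ↦ a_n(x; c, t) is monotonically decreasing in n (where the factor sinh(c/2)/(c/2) is interpreted as 1 when c = 0). -/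
open Real

/-- The envelope terms `a_n(x; c, t)` of the KG(1,c) density, with the factor
`sinh(c/2)/(c/2)` interpreted as `1` when `c = 0`. -/
noncomputable def aSeq (c t x : ℝ) (n : ℕ) : ℝ :=
  (if c = 0 then 1 else Real.sinh (c / 2) / (c / 2)) * Real.exp (-c ^ 2 * x / 2) *
    (if x < t then aL x n else aR x n)

/-!
For the left tail put `y = 1 / (4 * x)`, so that `1 ≤ y`. At even `n`, `aL x n` is
`(n + 1) ^ 2 * y ≥ 1` times `aL x (n + 1)`. Combined with the Gaussian ratio
`aL x (n + 2) / aL x n = exp (-(2 * (n + 1) * y))` at odd `n`, this reduces the step from `n` odd to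
`(m + 1) ^ 2 * y ≤ exp (2 * m * y)` with `m = n + 1`, a consequence of `1 + m * y ≤ exp (m * y)`.

For the right tail put `a = 2 * π ^ 2 * x` and `k = n + 1`. The ratio of consecutive terms is
`((k + 1) / k) ^ 2 * exp (-(a * (2 * k + 1)))`, at most `4 * exp (-(3 * a))`, and the latter is at
most `1` exactly when `log 2 / (3 * π ^ 2) ≤ x`.
-/

theorem sinh_div_self_nonneg (x : ℝ) : 0 ≤ sinh x / x := by
  rcases le_total 0 x with hx | hx
  · exact div_nonneg (sinh_nonneg_iff.2 hx) hx
  · exact div_nonneg_of_nonpos (sinh_nonpos_iff.2 hx) hx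

theorem add_one_sq_mul_le_exp {m y : ℝ} (hm : 1 ≤ m) (hy : 1 ≤ y) :
    (m + 1) ^ 2 * y ≤ exp (2 * (m * y)) := by
  have hmy : 1 ≤ m ^ 2 * y := one_le_mul_of_one_le_of_one_le (one_le_pow₀ hm) hy
  calc
    (m + 1) ^ 2 * y ≤ (m + 1) ^ 2 * y + (y - 1) * (m ^ 2 * y - 1) :=
      le_add_of_nonneg_right (mul_nonneg (sub_nonneg.2 hy) (sub_nonneg.2 hmy))
    _ = (m * y + 1) ^ 2 := by ring
    _ ≤ exp (m * y) ^ 2 := by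
      gcongr
      exact add_one_le_exp (m * y)
    _ = exp (2 * (m * y)) := by rw [← exp_nat_mul, Nat.cast_ofNat]

theorem add_one_sq_mul_exp_neg_mul_sq_le {a k : ℝ} (ha : 2 * log 2 ≤ 3 * a) (hk : 1 ≤ k) :
    (k + 1) ^ 2 * exp (-(a * (k + 1) ^ 2)) ≤ k ^ 2 * exp (-(a * k ^ 2)) := by
  have ha₀ : 0 ≤ a := by linarith [log_pos one_lt_two]
  have four_le : 4 ≤ exp (a * (2 * k + 1)) :=
    calc
      (4 : ℝ) = exp (2 * log 2) := by
        rw [two_mul, exp_add, exp_log two_pos]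
        norm_num
      _ ≤ exp (a * (2 * k + 1)) := exp_le_exp.2 (ha.trans (by nlinarith))
  calc
    (k + 1) ^ 2 * exp (-(a * (k + 1) ^ 2)) ≤ k ^ 2 * 4 * exp (-(a * (k + 1) ^ 2)) := by
      gcongr
      nlinarith
    _ ≤ k ^ 2 * exp (a * (2 * k + 1)) * exp (-(a * (k + 1) ^ 2)) := by gcongr
    _ = k ^ 2 * exp (-(a * k ^ 2)) := by
      rw [mul_assoc, ← exp_add]
      ring_nf

theorem aL_nonneg {x : ℝ} (hx : 0 < x) (n : ℕ) : 0 ≤ aL x n := by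
  unfold aL
  split_ifs <;> positivity

theorem aL_of_even {x : ℝ} (hx : 0 < x) {n : ℕ} (hn : Even n) :
    aL x n = ((n : ℝ) + 1) ^ 2 / (4 * x) * aL x (n + 1) := by
  have hpow : (2 * x) ^ ((5 : ℝ) / 2) = (2 * x) ^ ((3 : ℝ) / 2) * (2 * x) := by
    rw [← rpow_add_one (by positivity)]
    norm_num
  rw [aL, aL, if_neg (Nat.not_odd_iff_even.2 hn), if_pos hn.add_one, hpow]
  push_cast
  field_simp
  norm_num

theorem aL_add_two_of_odd (x : ℝ) {n : ℕ} (hn : Odd n) :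
    aL x (n + 2) = exp (-(2 * (((n : ℝ) + 1) * (1 / (4 * x))))) * aL x n := by
  rw [aL, aL, if_pos hn, if_pos (hn.add_even even_two), mul_left_comm, ← exp_add]
  push_cast
  ring_nf

theorem aL_succ_le_of_even {x : ℝ} (hx : 0 < x) (hx₁ : x ≤ 1 / 4) {n : ℕ} (hn : Even n) :
    aL x (n + 1) ≤ aL x n := by
  have one_le : 1 ≤ ((n : ℝ) + 1) ^ 2 / (4 * x) := by
    rw [one_le_div (by positivity)]
    nlinarith [n.cast_nonneg (α := ℝ)]
  rw [aL_of_even hx hn]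
  exact le_mul_of_one_le_left (aL_nonneg hx _) one_le

theorem aL_succ_le_of_odd {x : ℝ} (hx : 0 < x) (hx₁ : x ≤ 1 / 4) {n : ℕ} (hn : Odd n) :
    aL x (n + 1) ≤ aL x n := by
  set m : ℝ := (n : ℝ) + 1
  set y : ℝ := 1 / (4 * x) with hy
  have one_le_m : 1 ≤ m := le_add_of_nonneg_left n.cast_nonneg
  have one_le_y : 1 ≤ y := by
    rw [hy, one_le_div (by positivity)]
    linarith
  calc
    aL x (n + 1) = (m + 1) ^ 2 * y * aL x (n + 2) := by
      rw [aL_of_even hx hn.add_one, Nat.cast_add_one, hy, mul_one_div]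
    _ ≤ exp (2 * (m * y)) * aL x (n + 2) :=
      mul_le_mul_of_nonneg_right (add_one_sq_mul_le_exp one_le_m one_le_y) (aL_nonneg hx _)
    _ = aL x n := by
      rw [aL_add_two_of_odd x hn, ← mul_assoc, ← exp_add, add_neg_cancel, exp_zero, one_mul]

theorem aL_antitone {x : ℝ} (hx : 0 < x) (hx₁ : x ≤ 1 / 4) : Antitone (aL x) :=
  antitone_nat_of_succ_le fun n =>
    n.even_or_odd.elim (aL_succ_le_of_even hx hx₁) (aL_succ_le_of_odd hx hx₁)

theorem aR_antitone {x : ℝ} (hx : log 2 / (3 * π ^ 2) ≤ x) : Antitone (aR x) := by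
  have ha : 2 * log 2 ≤ 3 * (2 * π ^ 2 * x) := by
    rw [div_le_iff₀ (by positivity)] at hx
    linarith
  have aR_eq (n : ℕ) : aR x n =
      4 * π ^ 2 * (((n : ℝ) + 1) ^ 2 * exp (-(2 * π ^ 2 * x * ((n : ℝ) + 1) ^ 2))) := by
    unfold aR
    ring_nf
  refine antitone_nat_of_succ_le fun n => ?_
  rw [aR_eq, aR_eq, Nat.cast_add_one]
  gcongr 4 * π ^ 2 * ?_
  exact add_one_sq_mul_exp_neg_mul_sq_le ha (le_add_of_nonneg_left n.cast_nonneg)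

/-- For a cutoff `log 2 / (3π²) < t < 1/4`, any `c`, and any fixed `x > 0`,
the sequence `n ↦ a_n(x; c, t)` is monotonically decreasing in `n`. -/
theorem aSeq_antitone (c t : ℝ) (ht₁ : Real.log 2 / (3 * π ^ 2) < t) (ht₂ : t < 1 / 4)
    (x : ℝ) (hx : 0 < x) :
    Antitone (fun n : ℕ => aSeq c t x n) := by
  have prefactor_nonneg :
      0 ≤ (if c = 0 then 1 else sinh (c / 2) / (c / 2)) * exp (-c ^ 2 * x / 2) := by
    refine mul_nonneg ?_ (exp_pos _).le
    split_ifs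
    exacts [zero_le_one, sinh_div_self_nonneg _]
  rcases lt_or_ge x t with hxt | htx
  · simpa only [aSeq, if_pos hxt] using
      (aL_antitone hx (hxt.trans ht₂).le).const_mul prefactor_nonneg
  · simpa only [aSeq, if_neg htx.not_gt] using
      (aR_antitone (ht₁.le.trans htx)).const_mul prefactor_nonneg
end

section
/- For every odd integer n ≥ 1 and every real x with 0 < x ≤ 1/4, one has (n+1)/(2x) + log(x) − 2·log(n+2) + 2·log(2) > 0. (This inequality establishes that a_n^L(x) ≥ a_{n+1}^L(x) for odd n when 0 < x < 1/4, where a_n^L(x) = 2/(π^{1/2}(2x)^{3/2}) exp(−n²/(8x)) for odd n and a_n^L(x) = (n+1)²/(π^{1/2}(2x)^{5/2}) exp(−(n+1)²/(8x)) for even n.) -/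
open Real

/-!
Put `c = 2(n + 1)` and `u = 4x ∈ (0, 1]`, so that the claim reads `2 log(n + 2) < c / u + log u`.
Since `log u ≥ 1 - 1/u` and `c ≥ 1`, the right side is smallest at `u = 1`, where it equals `c`,
and `log(n + 2) < n + 1`.
-/

theorem le_div_add_log {c u : ℝ} (hc : 1 ≤ c) (hu : 0 < u) (hu1 : u ≤ 1) :
    c ≤ c / u + log u := by
  have inv_sub_one_nonneg : 0 ≤ u⁻¹ - 1 := sub_nonneg.2 ((one_le_inv₀ hu).2 hu1)
  calc
    c = c / u - c * (u⁻¹ - 1) := by ring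
    _ ≤ c / u - (u⁻¹ - 1) := sub_le_sub_left (le_mul_of_one_le_left inv_sub_one_nonneg hc) _
    _ = c / u + (1 - u⁻¹) := by ring
    _ ≤ c / u + log u := add_le_add_right (one_sub_inv_le_log_of_pos hu) _

theorem log_four_mul {x : ℝ} (hx : x ≠ 0) : log (4 * x) = 2 * log 2 + log x := by
  rw [log_mul four_ne_zero hx, show (4 : ℝ) = 2 ^ 2 by norm_num, log_pow, Nat.cast_ofNat]

theorem odd_left_term_ineq_general {t x : ℝ} (ht : -1 / 2 ≤ t) (hx : 0 < x) (hx' : x ≤ 1 / 4) :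
    (t + 1) / (2 * x) + log x - 2 * log (t + 2) + 2 * log 2 > 0 := by
  have log_lt : log (t + 2) < t + 2 - 1 := log_lt_sub_one_of_pos (by linarith) (by linarith)
  have le_div_add_log_four_mul : 2 * (t + 1) ≤ 2 * (t + 1) / (4 * x) + log (4 * x) :=
    le_div_add_log (by linarith) (by positivity) (by linarith)
  have div_eq : 2 * (t + 1) / (4 * x) = (t + 1) / (2 * x) := by ring
  rw [div_eq, log_four_mul hx.ne'] at le_div_add_log_four_mul
  linarith

/-- For every odd integer `n ≥ 1` and every real `0 < x ≤ 1/4`,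
`(n+1)/(2x) + log x − 2 log(n+2) + 2 log 2 > 0`. -/
theorem odd_left_term_ineq (n : ℕ) (hn : Odd n) (hn1 : 1 ≤ n) (x : ℝ)
    (hx : 0 < x) (hx' : x ≤ 1 / 4) :
    ((n : ℝ) + 1) / (2 * x) + Real.log x - 2 * Real.log ((n : ℝ) + 2) +
      2 * Real.log 2 > 0 :=
  odd_left_term_ineq_general (by linarith [n.cast_nonneg (α := ℝ)]) hx hx'
end

section
/- For every real number c, ∫_0^∞ x^{−5/2} · exp(−(c²x + 1/(4x))/2) dx = 2^{5/2} · π^{1/2} · (|c| + 2) · exp(−|c|/2). (This evaluates the normalizing constant of the generalized inverse Gaussian distribution GIG(−3/2, c², 1/4), whose density is proportional to x^{−5/2} exp(−(c²x + 1/(4x))/2) on (0,∞); for c = 0 it reduces to an inverse-gamma normalizing constant.) -/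
open Real MeasureTheory

/-!
Substituting `x = t⁻²` turns the integral into one of
`t ^ 2 * exp (-(α ^ 2 / t ^ 2 + β ^ 2 * t ^ 2) / 2)` with `α = |c|` and `β = 1 / 2`, whose exponent
is `-(φ t) ^ 2 / 2 - α * β` for `φ t = β * t - α / t`. For `α > 0` the map `φ` is an increasing
bijection of `(0, ∞)` onto `ℝ` (the Cauchy–Schlömilch substitution), and the involution
`t ↦ (α / β) / t` changes the sign of `φ`. Averaging the measure `t ^ 2 dt` over this involution
gives `(φ ^ 2 + α * β) / (2 * β ^ 3) dφ`, so the integral reduces to Gaussian moments of order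
`0` and `2`. For `α = 0` the map `φ` is a dilation and the same formula holds.
-/

section Substitutions

variable {E : Type*} [NormedAddCommGroup E] [NormedSpace ℝ E] {α β k : ℝ}

lemma hasDerivAt_mul_sub_div (α β : ℝ) {t : ℝ} (ht : t ≠ 0) :
    HasDerivAt (fun s ↦ β * s - α / s) (β + α / t ^ 2) t := by
  simpa only [id, mul_one, mul_neg, sub_neg_eq_add, div_eq_mul_inv] using!
    ((hasDerivAt_id t).const_mul β).sub ((hasDerivAt_inv ht).const_mul α)

lemma strictMonoOn_mul_sub_div (hα : 0 ≤ α) (hβ : 0 < β) :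
    StrictMonoOn (fun t ↦ β * t - α / t) (Set.Ioi 0) := by
  intro s (hs : 0 < s) t _ hst
  have hdiv : α / t ≤ α / s := by gcongr
  have hmul : β * s < β * t := by gcongr
  exact add_lt_add_of_lt_of_le hmul (neg_le_neg hdiv)

lemma image_mul_sub_div_Ioi (hα : 0 < α) (hβ : 0 < β) :
    (fun t ↦ β * t - α / t) '' Set.Ioi 0 = Set.univ := by
  refine Set.eq_univ_of_forall fun u ↦ ?_
  obtain ⟨s, hs⟩ : ∃ s, s = √(u ^ 2 + 4 * α * β) := ⟨_, rfl⟩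
  have hsq : s ^ 2 = u ^ 2 + 4 * α * β := by rw [hs, sq_sqrt (by positivity)]
  have hus : |u| < s := by
    rw [hs, ← sqrt_sq_eq_abs]
    exact sqrt_lt_sqrt (sq_nonneg u) (lt_add_of_pos_right _ (by positivity))
  have hpos : 0 < u + s := by linarith [neg_abs_le u]
  refine ⟨(u + s) / (2 * β), Set.mem_Ioi.2 (by positivity), ?_⟩
  field_simp
  linear_combination hsq

lemma integral_Ioi_smul_comp_mul_sub_div (hα : 0 < α) (hβ : 0 < β) (g : ℝ → E) :
    ∫ t in Set.Ioi 0, (β + α / t ^ 2) • g (β * t - α / t) = ∫ u, g u := by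
  rw [← setIntegral_univ (f := g), ← image_mul_sub_div_Ioi hα hβ,
    integral_image_eq_integral_deriv_smul_of_monotoneOn measurableSet_Ioi
      (fun _ ht ↦ (hasDerivAt_mul_sub_div α β (ne_of_gt ht)).hasDerivWithinAt)
      (strictMonoOn_mul_sub_div hα.le hβ).monotoneOn]

lemma integrableOn_Ioi_smul_comp_mul_sub_div_iff (hα : 0 < α) (hβ : 0 < β) (g : ℝ → E) :
    IntegrableOn (fun t ↦ (β + α / t ^ 2) • g (β * t - α / t)) (Set.Ioi 0) ↔ Integrable g := by
  rw [← integrableOn_univ (f := g), ← image_mul_sub_div_Ioi hα hβ,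
    integrableOn_image_iff_integrableOn_deriv_smul_of_monotoneOn measurableSet_Ioi
      (fun _ ht ↦ (hasDerivAt_mul_sub_div α β (ne_of_gt ht)).hasDerivWithinAt)
      (strictMonoOn_mul_sub_div hα.le hβ).monotoneOn]

lemma image_const_div_Ioi_zero (hk : 0 < k) : (fun t ↦ k / t) '' Set.Ioi 0 = Set.Ioi 0 := by
  refine Set.Subset.antisymm (Set.image_subset_iff.2 fun t ht ↦ div_pos hk ht) fun t ht ↦ ?_
  exact ⟨k / t, div_pos hk ht, div_div_cancel₀ hk.ne'⟩

lemma hasDerivAt_const_div (k : ℝ) {t : ℝ} (ht : t ≠ 0) :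
    HasDerivAt (fun s ↦ k / s) (-(k / t ^ 2)) t := by
  simpa [div_eq_mul_inv] using (hasDerivAt_inv ht).const_mul k

lemma antitoneOn_const_div_Ioi (hk : 0 ≤ k) : AntitoneOn (fun t ↦ k / t) (Set.Ioi 0) :=
  fun _ hs _ _ hst ↦ div_le_div_of_nonneg_left hk hs hst

lemma integral_Ioi_smul_comp_const_div (hk : 0 < k) (g : ℝ → E) :
    ∫ t in Set.Ioi 0, (k / t ^ 2) • g (k / t) = ∫ t in Set.Ioi 0, g t := by
  conv_rhs => rw [← image_const_div_Ioi_zero hk]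
  simp only [integral_image_eq_integral_deriv_smul_of_antitoneOn measurableSet_Ioi
    (fun _ ht ↦ (hasDerivAt_const_div k (ne_of_gt ht)).hasDerivWithinAt)
    (antitoneOn_const_div_Ioi hk.le), neg_neg]

lemma integrableOn_Ioi_smul_comp_const_div_iff (hk : 0 < k) (g : ℝ → E) :
    IntegrableOn (fun t ↦ (k / t ^ 2) • g (k / t)) (Set.Ioi 0) ↔ IntegrableOn g (Set.Ioi 0) := by
  conv_rhs => rw [← image_const_div_Ioi_zero hk]
  simp only [integrableOn_image_iff_integrableOn_deriv_smul_of_antitoneOn measurableSet_Ioi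
    (fun _ ht ↦ (hasDerivAt_const_div k (ne_of_gt ht)).hasDerivWithinAt)
    (antitoneOn_const_div_Ioi hk.le), neg_neg]

lemma integral_Ioi_rpow_neg_five_halves_smul (g : ℝ → E) :
    ∫ x in Set.Ioi (0 : ℝ), x ^ (-(5 : ℝ) / 2) • g x =
      (2 : ℝ) • ∫ t in Set.Ioi (0 : ℝ), t ^ 2 • g (t ^ 2)⁻¹ := by
  rw [← integral_comp_rpow_Ioi _ (by norm_num : (-2 : ℝ) ≠ 0), ← integral_smul]
  refine setIntegral_congr_fun measurableSet_Ioi fun t (ht : 0 < t) ↦ ?_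
  have harg : t ^ (-2 : ℝ) = (t ^ 2)⁻¹ := by rw [rpow_neg ht.le, rpow_two]
  have hweight : t ^ ((-2 : ℝ) - 1) * (t ^ (-2 : ℝ)) ^ (-(5 : ℝ) / 2) = t ^ 2 := by
    rw [← rpow_mul ht.le, ← rpow_add ht, ← rpow_two]
    norm_num
  rw [smul_smul, smul_smul, mul_assoc, hweight, harg]
  norm_num

end Substitutions

section EvenFunctions

variable {α β : ℝ} {f : ℝ → ℝ}

lemma integral_eq_two_mul_integral_Ioi_of_even (hf : f.Even) :
    ∫ u, f u = 2 * ∫ u in Set.Ioi 0, f u := by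
  have habs (u : ℝ) : f |u| = f u := by
    rcases abs_choice u with h | h <;> simp only [h, hf u]
  simpa only [habs] using integral_comp_abs (f := f)

lemma sq_add_const_div_sq (hβ : β ≠ 0) {t : ℝ} (ht : t ≠ 0) :
    t ^ 2 + α / β / t ^ 2 * (α / β / t) ^ 2 =
      (β + α / t ^ 2) * ((β * t - α / t) ^ 2 + α * β) / β ^ 3 := by
  field_simp
  ring

lemma integrableOn_Ioi_sq_mul_comp_mul_sub_div (hα : 0 < α) (hβ : 0 < β)
    (hint : Integrable fun u ↦ (u ^ 2 + α * β) * f u) :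
    IntegrableOn (fun t ↦ t ^ 2 * f (β * t - α / t)) (Set.Ioi 0) := by
  have hsubst := (integrableOn_Ioi_smul_comp_mul_sub_div_iff hα hβ _).2 hint
  let r : ℝ → ℝ := fun t ↦ t ^ 2 / ((β + α / t ^ 2) * ((β * t - α / t) ^ 2 + α * β))
  have hr : ∀ t ∈ Set.Ioi (0 : ℝ), ‖r t‖ ≤ 1 / β ^ 3 := by
    intro t (ht : 0 < t)
    rw [norm_of_nonneg (by positivity), div_le_iff₀ (by positivity), div_mul_eq_mul_div, one_mul,
      ← sq_add_const_div_sq hβ.ne' ht.ne']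
    exact le_add_of_nonneg_right (by positivity)
  have hprod := hsubst.bdd_mul (by fun_prop : Measurable r).aestronglyMeasurable
    (ae_restrict_of_forall_mem measurableSet_Ioi hr)
  refine IntegrableOn.congr_fun hprod (fun t (ht : 0 < t) ↦ ?_) measurableSet_Ioi
  simp only [r, smul_eq_mul]
  field_simp

lemma integral_Ioi_sq_mul_comp_mul_sub_div_of_pos (hα : 0 < α) (hβ : 0 < β) (hf : f.Even)
    (hint : Integrable fun u ↦ (u ^ 2 + α * β) * f u) :
    ∫ t in Set.Ioi 0, t ^ 2 * f (β * t - α / t) =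
      (∫ u, (u ^ 2 + α * β) * f u) / (2 * β ^ 3) := by
  let w : ℝ → ℝ := fun t ↦ t ^ 2 * f (β * t - α / t)
  have hk : 0 < α / β := div_pos hα hβ
  have hw : IntegrableOn w (Set.Ioi 0) := integrableOn_Ioi_sq_mul_comp_mul_sub_div hα hβ hint
  have hsum : ∀ t ∈ Set.Ioi (0 : ℝ), w t + (α / β / t ^ 2) • w (α / β / t) =
      (β + α / t ^ 2) • (((β * t - α / t) ^ 2 + α * β) * f (β * t - α / t)) / β ^ 3 := by
    intro t (ht : 0 < t)
    have hreflect : β * (α / β / t) - α / (α / β / t) = -(β * t - α / t) := by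
      field_simp
      ring
    simp only [w, hreflect, hf (β * t - α / t), smul_eq_mul]
    linear_combination f (β * t - α / t) * sq_add_const_div_sq (α := α) hβ.ne' ht.ne'
  have htwice : 2 * ∫ t in Set.Ioi 0, w t = (∫ u, (u ^ 2 + α * β) * f u) / β ^ 3 := calc
    2 * ∫ t in Set.Ioi 0, w t
      = ∫ t in Set.Ioi 0, (w t + (α / β / t ^ 2) • w (α / β / t)) := by
        rw [integral_add hw ((integrableOn_Ioi_smul_comp_const_div_iff hk w).2 hw),
          integral_Ioi_smul_comp_const_div hk, two_mul]
    _ = (∫ u, (u ^ 2 + α * β) * f u) / β ^ 3 := by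
        rw [setIntegral_congr_fun measurableSet_Ioi hsum, integral_div,
          integral_Ioi_smul_comp_mul_sub_div hα hβ fun u ↦ (u ^ 2 + α * β) * f u]
  rw [mul_comm 2, ← div_div, ← htwice, mul_div_cancel_left₀ _ two_ne_zero]

lemma integral_Ioi_sq_mul_comp_mul_left (hβ : 0 < β) (hf : f.Even) :
    ∫ t in Set.Ioi 0, t ^ 2 * f (β * t) = (∫ u, u ^ 2 * f u) / (2 * β ^ 3) := by
  have heven : (fun u ↦ u ^ 2 * f u).Even := fun u ↦ by simp only [neg_sq, hf u]
  have hscale (t : ℝ) : t ^ 2 * f (β * t) = (β ^ 2)⁻¹ * ((β * t) ^ 2 * f (β * t)) := by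
    field_simp
  simp_rw [hscale, integral_const_mul]
  rw [integral_comp_mul_left_Ioi (fun u ↦ u ^ 2 * f u) 0 hβ, mul_zero, smul_eq_mul,
    integral_eq_two_mul_integral_Ioi_of_even heven]
  field_simp

lemma integral_Ioi_sq_mul_comp_mul_sub_div (hα : 0 ≤ α) (hβ : 0 < β) (hf : f.Even)
    (hint : Integrable fun u ↦ (u ^ 2 + α * β) * f u) :
    ∫ t in Set.Ioi 0, t ^ 2 * f (β * t - α / t) =
      (∫ u, (u ^ 2 + α * β) * f u) / (2 * β ^ 3) := by
  rcases hα.eq_or_lt with rfl | hα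
  · simpa using integral_Ioi_sq_mul_comp_mul_left hβ hf
  · exact integral_Ioi_sq_mul_comp_mul_sub_div_of_pos hα hβ hf hint

end EvenFunctions

section Gaussian

variable {b : ℝ}

lemma integrable_sq_mul_exp_neg_mul_sq (hb : 0 < b) :
    Integrable fun u : ℝ ↦ u ^ 2 * exp (-b * u ^ 2) := by
  simpa using integrable_rpow_mul_exp_neg_mul_sq hb (by norm_num : (-1 : ℝ) < 2)

lemma integral_sq_mul_exp_neg_mul_sq (hb : 0 < b) :
    ∫ u : ℝ, u ^ 2 * exp (-b * u ^ 2) = √(π / b) / (2 * b) := by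
  have hGamma : Gamma (3 / 2) = √π / 2 := by
    rw [show (3 / 2 : ℝ) = 1 / 2 + 1 by norm_num, Gamma_add_one (by norm_num), Gamma_one_half_eq]
    ring
  have hpow : b ^ (-(3 / 2) : ℝ) = (b * √b)⁻¹ := by
    rw [rpow_neg hb.le, show (3 / 2 : ℝ) = 1 + 1 / 2 by norm_num, rpow_add hb, rpow_one,
      sqrt_eq_rpow]
  have hhalf : ∫ u in Set.Ioi (0 : ℝ), u ^ 2 * exp (-b * u ^ 2) = (b * √b)⁻¹ * (√π / 4) := by
    have hrpow := integral_rpow_mul_exp_neg_mul_rpow two_pos (by norm_num : (-1 : ℝ) < 2) hb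
    simp only [rpow_two] at hrpow
    rw [hrpow, show (-(2 + 1) / 2 : ℝ) = -(3 / 2) by norm_num, hpow,
      show ((2 + 1) / 2 : ℝ) = 3 / 2 by norm_num, hGamma]
    ring
  rw [integral_eq_two_mul_integral_Ioi_of_even (fun u ↦ by simp only [neg_sq]), hhalf,
    sqrt_div' _ hb.le]
  field_simp
  norm_num

lemma integrable_sq_add_const_mul_exp_neg_mul_sq (hb : 0 < b) (k : ℝ) :
    Integrable fun u : ℝ ↦ (u ^ 2 + k) * exp (-b * u ^ 2) := by
  simp_rw [add_mul]
  exact (integrable_sq_mul_exp_neg_mul_sq hb).add ((integrable_exp_neg_mul_sq hb).const_mul k)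

lemma integral_sq_add_const_mul_exp_neg_mul_sq (hb : 0 < b) (k : ℝ) :
    ∫ u : ℝ, (u ^ 2 + k) * exp (-b * u ^ 2) = (1 / (2 * b) + k) * √(π / b) := by
  simp_rw [add_mul]
  rw [integral_add (integrable_sq_mul_exp_neg_mul_sq hb)
    ((integrable_exp_neg_mul_sq hb).const_mul k), integral_const_mul, integral_gaussian,
    integral_sq_mul_exp_neg_mul_sq hb]
  ring

lemma integral_Ioi_sq_mul_exp_neg_div_sq_add_sq {α β : ℝ} (hα : 0 ≤ α) (hβ : 0 < β) :
    ∫ t in Set.Ioi (0 : ℝ), t ^ 2 * exp (-(α ^ 2 / t ^ 2 + β ^ 2 * t ^ 2) / 2) =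
      √(2 * π) * (1 + α * β) * exp (-(α * β)) / (2 * β ^ 3) := by
  let f : ℝ → ℝ := fun u ↦ exp (-(1 / 2) * u ^ 2)
  have hf : f.Even := fun u ↦ by simp only [f, neg_sq]
  have hint : Integrable fun u ↦ (u ^ 2 + α * β) * f u :=
    integrable_sq_add_const_mul_exp_neg_mul_sq one_half_pos _
  have hsquare : ∀ t ∈ Set.Ioi (0 : ℝ),
      t ^ 2 * exp (-(α ^ 2 / t ^ 2 + β ^ 2 * t ^ 2) / 2) =
        exp (-(α * β)) * (t ^ 2 * f (β * t - α / t)) := by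
    intro t (ht : 0 < t)
    rw [mul_left_comm, ← exp_add]
    congr 2
    field_simp
    ring
  rw [setIntegral_congr_fun measurableSet_Ioi hsquare, integral_const_mul,
    integral_Ioi_sq_mul_comp_mul_sub_div hα hβ hf hint,
    integral_sq_add_const_mul_exp_neg_mul_sq one_half_pos, div_div_eq_mul_div]
  ring_nf

end Gaussian

theorem gig_normalizing_constant_general (α : ℝ) {β : ℝ} (hβ : 0 < β) :
    ∫ x in Set.Ioi (0 : ℝ), x ^ (-(5 : ℝ) / 2) * exp (-(α ^ 2 * x + β ^ 2 / x) / 2) =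
      √(2 * π) * (1 + |α| * β) * exp (-(|α| * β)) / β ^ 3 := by
  have hsubst := integral_Ioi_rpow_neg_five_halves_smul
    fun x ↦ exp (-(α ^ 2 * x + β ^ 2 / x) / 2)
  simp only [smul_eq_mul, div_inv_eq_mul, ← div_eq_mul_inv] at hsubst
  rw [hsubst, ← sq_abs α, integral_Ioi_sq_mul_exp_neg_div_sq_add_sq (abs_nonneg α) hβ]
  ring

lemma two_rpow_five_halves : (2 : ℝ) ^ ((5 : ℝ) / 2) = 4 * √2 := by
  rw [show (5 : ℝ) / 2 = 2 + 1 / 2 by norm_num, rpow_add two_pos, ← sqrt_eq_rpow, rpow_two]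
  norm_num

/-- Normalizing constant of the generalized inverse Gaussian distribution
`GIG(−3/2, c², 1/4)`: for every real `c`,
`∫_0^∞ x^{−5/2} exp(−(c²x + 1/(4x))/2) dx = 2^{5/2} √π (|c| + 2) exp(−|c|/2)`. -/
theorem gig_normalizing_constant (c : ℝ) :
    ∫ x in Set.Ioi (0 : ℝ), x ^ (-(5 : ℝ) / 2) * Real.exp (-(c ^ 2 * x + 1 / (4 * x)) / 2) =
      (2 : ℝ) ^ ((5 : ℝ) / 2) * Real.sqrt π * (|c| + 2) * Real.exp (-|c| / 2) := by
  have hrate (x : ℝ) : 1 / (4 * x) = (1 / 2) ^ 2 / x := by ring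
  simp_rw [hrate, gig_normalizing_constant_general c one_half_pos, two_rpow_five_halves,
    sqrt_mul zero_le_two]
  ring_nf
end

section
/- For every real number c ≠ 0, the series ∑_{k=1}^∞ 1/(k² + c²/(4π²)) converges and equals (2π²/c²) · ((c/2)·coth(c/2) − 1). (This computes the mean of the Kolmogorov-Gamma distribution KG(b,c): if κ = (1/(2π²))∑_{k=1}^∞ ε_k/(k² + c²/(4π²)) with ε_k i.i.d. Gamma(b,1), then E(κ) = b·c^{−2}·((c/2)coth(c/2) − 1).) -/
open Real

/-!
Pairing the poles at `±(k + 1)` in the Mittag-Leffler expansion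
`π cot(πz) - 1/z = ∑ (1/(z - (k + 1)) + 1/(z + (k + 1)))` gives the series of
`1/((k + 1)² - z²)`. The substitution `z = w * I` turns cotangents into hyperbolic cotangents, and
`w = c/(2π)` yields the mean of the Kolmogorov-Gamma distribution.
-/

lemma mem_integerComplement_of_sin_pi_mul_ne_zero {z : ℂ} (hz : Complex.sin (π * z) ≠ 0) :
    z ∈ Complex.integerComplement := by
  rintro ⟨n, rfl⟩
  exact hz (by rw [mul_comm, Complex.sin_int_mul_pi])

lemma hasSum_cotTerm {z : ℂ} (hz : z ∈ Complex.integerComplement) :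
    HasSum (cotTerm z) (π * Complex.cot (π * z) - 1 / z) := by
  rw [cot_series_rep' hz]
  exact (summable_cotTerm hz).hasSum

lemma hasSum_one_div_nat_add_one_sq_sub_sq {z : ℂ} (hz : z ∈ Complex.integerComplement) :
    HasSum (fun k : ℕ => 1 / (((k : ℂ) + 1) ^ 2 - z ^ 2))
      ((1 - π * z * Complex.cot (π * z)) / (2 * z ^ 2)) := by
  have hz₀ : z ≠ 0 := Complex.integerComplement.ne_zero hz
  have hterm (k : ℕ) : 1 / (((k : ℂ) + 1) ^ 2 - z ^ 2) = -1 / (2 * z) * cotTerm z k := by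
    rw [cotTerm_identity hz, show ((k : ℂ) + 1) ^ 2 - z ^ 2 = -((z + (k + 1)) * (z - (k + 1))) by
      ring, one_div_neg_eq_neg_one_div]
    field_simp
  have hvalue : (1 - π * z * Complex.cot (π * z)) / (2 * z ^ 2) =
      -1 / (2 * z) * (π * Complex.cot (π * z) - 1 / z) := by
    field_simp
    ring
  simp only [hterm, hvalue]
  exact (hasSum_cotTerm hz).mul_left _

lemma mul_I_mul_cot_mul_I (w : ℂ) :
    w * Complex.I * Complex.cot (w * Complex.I) = w * (Complex.cosh w / Complex.sinh w) := by
  rw [Complex.cot, Complex.cos_mul_I, Complex.sin_mul_I]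
  field [Complex.I_ne_zero]

lemma hasSum_one_div_nat_add_one_sq_add_sq {w : ℂ} (hw : Complex.sinh (π * w) ≠ 0) :
    HasSum (fun k : ℕ => 1 / (((k : ℂ) + 1) ^ 2 + w ^ 2))
      ((π * w * (Complex.cosh (π * w) / Complex.sinh (π * w)) - 1) / (2 * w ^ 2)) := by
  have hwI : w * Complex.I ∈ Complex.integerComplement := by
    refine mem_integerComplement_of_sin_pi_mul_ne_zero ?_
    rw [← mul_assoc, Complex.sin_mul_I]
    exact mul_ne_zero hw Complex.I_ne_zero
  have hsq : (w * Complex.I) ^ 2 = -w ^ 2 := by rw [mul_pow, Complex.I_sq, mul_neg_one]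
  have hsum := hasSum_one_div_nat_add_one_sq_sub_sq hwI
  rw [← mul_assoc, mul_I_mul_cot_mul_I] at hsum
  simpa only [hsq, sub_neg_eq_add, mul_neg, div_neg, ← neg_div, neg_sub] using hsum

theorem kg_mean_series_general (c : ℂ) (hc : Complex.sinh (c / 2) ≠ 0) :
    HasSum (fun k : ℕ => 1 / (((k : ℂ) + 1) ^ 2 + c ^ 2 / (4 * π ^ 2)))
      (2 * π ^ 2 / c ^ 2 * (c / 2 * (Complex.cosh (c / 2) / Complex.sinh (c / 2)) - 1)) := by
  have hπ : (π : ℂ) ≠ 0 := Complex.ofReal_ne_zero.mpr pi_ne_zero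
  have hmul : π * (c / (2 * π)) = c / 2 := by field
  have hsq : (c / (2 * π)) ^ 2 = c ^ 2 / (4 * π ^ 2) := by ring
  have hsum := hasSum_one_div_nat_add_one_sq_add_sq (w := c / (2 * π)) (by rwa [hmul])
  rw [hmul, hsq] at hsum
  convert hsum using 1
  field

/-- For every `c ≠ 0`, `∑_{k=1}^∞ 1/(k² + c²/(4π²)) = (2π²/c²)((c/2) coth(c/2) − 1)`,
the series computing the mean of the Kolmogorov-Gamma distribution `KG(b,c)`. -/
theorem kg_mean_series (c : ℝ) (hc : c ≠ 0) :
    HasSum (fun k : ℕ => 1 / (((k : ℝ) + 1) ^ 2 + c ^ 2 / (4 * π ^ 2)))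
      (2 * π ^ 2 / c ^ 2 * (c / 2 * (Real.cosh (c / 2) / Real.sinh (c / 2)) - 1)) := by
  have hsinh : Real.sinh (c / 2) ≠ 0 := sinh_ne_zero.mpr (div_ne_zero hc two_ne_zero)
  exact_mod_cast kg_mean_series_general c (by exact_mod_cast hsinh)
end

section
/- For every real θ ≠ 0, one has 0 < 1/θ² − 1/(2·cosh(θ) − 2) < 1/12. (The quantity 1/θ² − 1/(2cosh(θ) − 2) = 1/θ² + 1/(2 − e^θ − e^{−θ}) equals B''(θ), the second derivative of the cobin cumulant function B(θ) = log((e^θ − 1)/θ); thus the cobin variance function is strictly positive and bounded above by its value 1/12 at θ = 0, where the maximum variance 1/12 is attained by the uniform distribution.) -/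
open Real

/-!
Put `x = θ / 2`. Since `2 cosh θ - 2 = (2 sinh x)²`, the variance equals
`(1 / x² - 1 / sinh² x) / 4`, so the claim is `0 < 1 / x² - 1 / sinh² x < 1 / 3`.
The lower bound is `|x| < |sinh x|`. For the upper bound, the hyperbolic Cusa–Huygens inequality
`3 sinh x < x (2 + cosh x)` for `0 < x` gives `1 / x² < (2 + cosh x)² / (9 sinh² x)`, and
`(2 + cosh x)² ≤ 3 (2 + cosh² x) = 3 (3 + sinh² x)`.
-/

open Set

theorem lt_of_hasDerivAt_lt {f g f' g' : ℝ → ℝ} {a b : ℝ} (hab : a < b) (ha : f a ≤ g a)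
    (hfc : ContinuousOn f (Icc a b)) (hgc : ContinuousOn g (Icc a b))
    (hf : ∀ x ∈ Ioo a b, HasDerivAt f (f' x) x) (hg : ∀ x ∈ Ioo a b, HasDerivAt g (g' x) x)
    (hlt : ∀ x ∈ Ioo a b, f' x < g' x) : f b < g b := by
  obtain ⟨c, hc, hslope⟩ := exists_hasDerivAt_eq_slope (g - f) (g' - f') hab (hgc.sub hfc)
    fun x hx ↦ (hg x hx).sub (hf x hx)
  have hpos : 0 < ((g - f) b - (g - f) a) / (b - a) := hslope ▸ sub_pos.2 (hlt c hc)
  have hincr : 0 < (g b - f b) - (g a - f a) := (div_pos_iff_of_pos_right (sub_pos.2 hab)).1 hpos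
  linarith

section Hyperbolic

variable {x : ℝ}

theorem sinh_lt_mul_cosh (hx : 0 < x) : sinh x < x * cosh x := by
  refine lt_of_hasDerivAt_lt (g := fun t ↦ t * cosh t) hx (by simp) (by fun_prop) (by fun_prop)
    (fun t _ ↦ hasDerivAt_sinh t) (fun t _ ↦ (hasDerivAt_id' t).mul (hasDerivAt_cosh t)) ?_
  intro t ⟨ht, _⟩
  have : 0 < t * sinh t := mul_pos ht (sinh_pos_iff.2 ht)
  linarith

theorem two_mul_cosh_sub_one_lt_mul_sinh (hx : 0 < x) : 2 * (cosh x - 1) < x * sinh x := by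
  refine lt_of_hasDerivAt_lt (f := fun t ↦ 2 * (cosh t - 1)) (g := fun t ↦ t * sinh t) hx
    (by simp) (by fun_prop) (by fun_prop)
    (fun t _ ↦ ((hasDerivAt_cosh t).sub_const 1).const_mul 2)
    (fun t _ ↦ (hasDerivAt_id' t).mul (hasDerivAt_sinh t)) ?_
  intro t ⟨ht, _⟩
  linarith [sinh_lt_mul_cosh ht]

theorem three_mul_sinh_lt_mul_two_add_cosh (hx : 0 < x) : 3 * sinh x < x * (2 + cosh x) := by
  refine lt_of_hasDerivAt_lt (f := fun t ↦ 3 * sinh t) (g := fun t ↦ t * (2 + cosh t)) hx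
    (by simp) (by fun_prop) (by fun_prop)
    (fun t _ ↦ (hasDerivAt_sinh t).const_mul 3)
    (fun t _ ↦ (hasDerivAt_id' t).mul ((hasDerivAt_cosh t).const_add 2)) ?_
  intro t ⟨ht, _⟩
  linarith [two_mul_cosh_sub_one_lt_mul_sinh ht]

theorem sq_lt_sinh_sq (hx : x ≠ 0) : x ^ 2 < sinh x ^ 2 := by
  rw [sq_lt_sq, abs_sinh]
  exact self_lt_sinh_iff.2 (abs_pos.2 hx)

theorem three_mul_sinh_sq_lt_sq_mul_three_add_sinh_sq (hx : x ≠ 0) :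
    3 * sinh x ^ 2 < x ^ 2 * (3 + sinh x ^ 2) := by
  have hcusa : 3 * |sinh x| < |x| * (2 + cosh x) := by
    simpa only [abs_sinh, cosh_abs] using three_mul_sinh_lt_mul_two_add_cosh (abs_pos.2 hx)
  have hcosh : (2 + cosh x) ^ 2 ≤ 3 * (3 + sinh x ^ 2) := by
    linarith [sq_nonneg (cosh x - 1), cosh_sq x]
  have hchain : 9 * sinh x ^ 2 < x ^ 2 * (3 * (3 + sinh x ^ 2)) := calc
    9 * sinh x ^ 2 = (3 * |sinh x|) ^ 2 := by rw [mul_pow, sq_abs]; norm_num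
    _ < (|x| * (2 + cosh x)) ^ 2 := by gcongr
    _ = x ^ 2 * (2 + cosh x) ^ 2 := by rw [mul_pow, sq_abs]
    _ ≤ x ^ 2 * (3 * (3 + sinh x ^ 2)) := by gcongr
  linarith

theorem one_div_sq_sub_one_div_sinh_sq_pos (hx : x ≠ 0) : 0 < 1 / x ^ 2 - 1 / sinh x ^ 2 :=
  sub_pos.2 (one_div_lt_one_div_of_lt (by positivity) (sq_lt_sinh_sq hx))

theorem one_div_sq_sub_one_div_sinh_sq_lt (hx : x ≠ 0) :
    1 / x ^ 2 - 1 / sinh x ^ 2 < 1 / 3 := by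
  have hx2 : 0 < x ^ 2 := by positivity
  have hs2 : 0 < sinh x ^ 2 := hx2.trans (sq_lt_sinh_sq hx)
  rw [div_sub_div _ _ hx2.ne' hs2.ne', div_lt_div_iff₀ (by positivity) (by positivity)]
  linarith [three_mul_sinh_sq_lt_sq_mul_three_add_sinh_sq hx]

theorem two_mul_cosh_sub_two_eq (x : ℝ) : 2 * cosh x - 2 = 4 * sinh (x / 2) ^ 2 := by
  have hdouble := cosh_two_mul (x / 2)
  rw [mul_div_cancel₀ x two_ne_zero, cosh_sq] at hdouble
  linarith

theorem one_div_sq_sub_one_div_two_mul_cosh_sub_two (x : ℝ) :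
    1 / x ^ 2 - 1 / (2 * cosh x - 2) = (1 / (x / 2) ^ 2 - 1 / sinh (x / 2) ^ 2) / 4 := by
  rw [two_mul_cosh_sub_two_eq]
  ring

end Hyperbolic

/-- For every `θ ≠ 0`, `0 < 1/θ² − 1/(2 cosh θ − 2) < 1/12`: the cobin variance
function `B''(θ)` is strictly positive and bounded above by its value `1/12` at `0`. -/
theorem cobin_variance_function_bounds (θ : ℝ) (hθ : θ ≠ 0) :
    0 < 1 / θ ^ 2 - 1 / (2 * Real.cosh θ - 2) ∧
    1 / θ ^ 2 - 1 / (2 * Real.cosh θ - 2) < 1 / 12 := by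
  have hhalf : θ / 2 ≠ 0 := div_ne_zero hθ two_ne_zero
  have hlower := one_div_sq_sub_one_div_sinh_sq_pos hhalf
  have hupper := one_div_sq_sub_one_div_sinh_sq_lt hhalf
  rw [one_div_sq_sub_one_div_two_mul_cosh_sub_two]
  constructor <;> linarith
end

section
/- Let B'(η) = e^η/(e^η − 1) − 1/η for η ≠ 0 (the inverse cobit link, i.e., the mean of the cobin distribution with natural parameter η). Then lim_{x→+∞} (1 − B'(πx)) / (1/2 − arctan(x)/π) = 1 and lim_{x→−∞} B'(πx) / (arctan(x)/π + 1/2) = 1. That is, up to the scaling of the linear predictor by π, the inverse cobit link approaches 0 and 1 at the same asymptotic rate as the inverse cauchit link arctan(x)/π + 1/2 (the Cauchy distribution c.d.f.). -/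
open Real Filter

/-- The inverse cobit link `B'(η) = e^η/(e^η − 1) − 1/η` (mean of the cobin
distribution with natural parameter `η`). -/
noncomputable def cobitInv (η : ℝ) : ℝ := Real.exp η / (Real.exp η - 1) - 1 / η

/-! Both links satisfy `F (-x) = 1 - F x` for `x ≠ 0`, so the tail at `-∞` is the mirror image of
the tail at `+∞`. There `1 - B'(y) = 1/y - 1/(e^y - 1)` is `1/y` up to an exponentially small error,
while `π/2 - arctan x = arctan (1/x)` behaves like `1/x`. Hence both upper tails, the first one at
`y = πx`, are equivalent to `1/(πx)`. -/

open Asymptotics Topology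

theorem exp_sub_one_ne_zero {y : ℝ} (hy : y ≠ 0) : exp y - 1 ≠ 0 :=
  sub_ne_zero.mpr ((exp_eq_one_iff y).not.mpr hy)

theorem one_sub_cobitInv {y : ℝ} (hy : y ≠ 0) :
    1 - cobitInv y = y⁻¹ - (exp y - 1)⁻¹ := by
  have hexp : exp y - 1 ≠ 0 := exp_sub_one_ne_zero hy
  rw [cobitInv]
  field_simp
  ring

theorem cobitInv_neg {y : ℝ} (hy : y ≠ 0) : cobitInv (-y) = 1 - cobitInv y := by
  have hexp : exp y - 1 ≠ 0 := exp_sub_one_ne_zero hy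
  have hexp' : 1 - exp y ≠ 0 := by rwa [← neg_sub, neg_ne_zero]
  rw [one_sub_cobitInv hy, cobitInv, exp_neg]
  field_simp
  ring

theorem isEquivalent_exp_sub_one_atTop : (fun y => exp y - 1) ~[atTop] exp :=
  IsEquivalent.refl.sub_isLittleO (isLittleO_one_exp_comp.mpr tendsto_id)

theorem isLittleO_inv_exp_sub_one_inv_atTop :
    (fun y => (exp y - 1)⁻¹) =o[atTop] fun y => y⁻¹ := by
  have hid : (fun y : ℝ => y) =o[atTop] exp := by
    simpa only [pow_one] using isLittleO_pow_exp_atTop (n := 1)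
  refine (hid.trans_isEquivalent isEquivalent_exp_sub_one_atTop.symm).inv_rev ?_
  filter_upwards [eventually_ne_atTop 0] with y hy hy'
  exact absurd hy' hy

theorem isEquivalent_one_sub_cobitInv_atTop :
    (fun y => 1 - cobitInv y) ~[atTop] fun y => y⁻¹ := by
  refine (IsEquivalent.refl.sub_isLittleO isLittleO_inv_exp_sub_one_inv_atTop).congr_left ?_
  filter_upwards [eventually_ne_atTop 0] with y hy
  exact (one_sub_cobitInv hy).symm

theorem isEquivalent_arctan_nhds_zero : arctan ~[𝓝 0] id := by
  simpa using! (hasDerivAt_arctan' 0).isLittleO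

theorem isEquivalent_pi_div_two_sub_arctan_atTop :
    (fun x => π / 2 - arctan x) ~[atTop] fun x => x⁻¹ := by
  refine (isEquivalent_arctan_nhds_zero.comp_tendsto tendsto_inv_atTop_zero).congr_left ?_
  filter_upwards [eventually_gt_atTop 0] with x hx
  exact arctan_inv_of_pos hx

theorem isEquivalent_one_half_sub_arctan_div_pi_atTop :
    (fun x => 1 / 2 - arctan x / π) ~[atTop] fun x => (π * x)⁻¹ := by
  have hscaled : (fun x => π⁻¹ * (π / 2 - arctan x)) ~[atTop] fun x => π⁻¹ * x⁻¹ :=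
    IsEquivalent.refl.mul isEquivalent_pi_div_two_sub_arctan_atTop
  convert hscaled using 2 with x x
  · field_simp
  · exact mul_inv π x

theorem arctan_div_pi_lt_one_half (x : ℝ) : arctan x / π < 1 / 2 := by
  rw [div_lt_iff₀ pi_pos, one_div_mul_eq_div]
  exact arctan_lt_pi_div_two x

theorem tendsto_one_sub_cobitInv_div_atTop :
    Tendsto (fun x => (1 - cobitInv (π * x)) / (1 / 2 - arctan x / π)) atTop (𝓝 1) := by
  have hcobit : (fun x => 1 - cobitInv (π * x)) ~[atTop] fun x => (π * x)⁻¹ :=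
    isEquivalent_one_sub_cobitInv_atTop.comp_tendsto (tendsto_id.const_mul_atTop pi_pos)
  have hne (x : ℝ) : 1 / 2 - arctan x / π ≠ 0 := (sub_pos.mpr (arctan_div_pi_lt_one_half x)).ne'
  exact (isEquivalent_iff_tendsto_one (.of_forall hne)).mp
    (hcobit.trans isEquivalent_one_half_sub_arctan_div_pi_atTop.symm)

/-- Up to scaling of the linear predictor by `π`, the inverse cobit link approaches
`0` and `1` at the same asymptotic rate as the Cauchy c.d.f. `arctan x/π + 1/2`:
`lim_{x→+∞} (1 − B'(πx))/(1/2 − arctan x/π) = 1` and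
`lim_{x→−∞} B'(πx)/(arctan x/π + 1/2) = 1`. -/
theorem cobit_cauchit_tail_equivalence :
    Tendsto (fun x : ℝ => (1 - cobitInv (π * x)) / (1 / 2 - Real.arctan x / π))
      atTop (nhds 1) ∧
    Tendsto (fun x : ℝ => cobitInv (π * x) / (Real.arctan x / π + 1 / 2))
      atBot (nhds 1) := by
  refine ⟨tendsto_one_sub_cobitInv_div_atTop,
    (tendsto_one_sub_cobitInv_div_atTop.comp tendsto_neg_atBot_atTop).congr' ?_⟩
  filter_upwards [eventually_ne_atBot 0] with x hx
  have hcobit : 1 - cobitInv (π * -x) = cobitInv (π * x) := by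
    rw [mul_neg, cobitInv_neg (mul_ne_zero pi_ne_zero hx), sub_sub_cancel]
  have hcauchit : 1 / 2 - arctan (-x) / π = arctan x / π + 1 / 2 := by
    rw [arctan_neg]
    ring
  rw [Function.comp_apply, hcobit, hcauchit]
end
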